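/- arXiv:1605.08115 — 2 statements merged into one kernel-verified Lean document; each statement's English description precedes it below -/
import Mathlib

section
/- Let L be a right Leibniz algebra over a field of characteristic ≠ 2 and B a two-sided ideal of L that is Es_{k'}-right nil for some integer k' ≥ 1. Then the following are equivalent: (i) B is right nilpotent (B^n = 0 for some n); (ii) B is nilpotent (B^{{n}} = 0 for some n); (iii) B is strongly nilpotent (B^{⟨n⟩} = 0 for some n). -/
open Classical

/-- The binary product `mul` is bilinear over `F`. -/
def IsBilin (F : Type*) [Field F] {L : Type*} [AddCommGroup L] [Module F L]
    (mul : L → L → L) : Prop :=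
  (∀ a b c : L, mul (a + b) c = mul a c + mul b c) ∧
  (∀ a b c : L, mul a (b + c) = mul a b + mul a c) ∧
  (∀ (r : F) (a b : L), mul (r • a) b = r • mul a b) ∧
  (∀ (r : F) (a b : L), mul a (r • b) = r • mul a b)

/-- The (right) Leibniz identity: `a(bc) = (ab)c - (ac)b`. -/
def IsRightLeibniz {L : Type*} [AddCommGroup L] (mul : L → L → L) : Prop :=
  ∀ a b c : L, mul a (mul b c) = mul (mul a b) c - mul (mul a c) b

/-- The left Leibniz identity: `a(bc) = (ab)c + b(ac)`. -/
def IsLeftLeibniz {L : Type*} [AddCommGroup L] (mul : L → L → L) : Prop :=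
  ∀ a b c : L, mul a (mul b c) = mul (mul a b) c + mul b (mul a c)

/-- `B` is a two-sided ideal: `xb ∈ B` and `bx ∈ B` for all `x ∈ L`, `b ∈ B`. -/
def IsIdeal {F : Type*} [Field F] {L : Type*} [AddCommGroup L] [Module F L]
    (mul : L → L → L) (B : Submodule F L) : Prop :=
  ∀ (x b : L), b ∈ B → mul x b ∈ B ∧ mul b x ∈ B

/-- `Ess F mul`: the two-sided ideal of `L` generated by the squares `{xx : x ∈ L}`. -/
def Ess (F : Type*) [Field F] {L : Type*} [AddCommGroup L] [Module F L]
    (mul : L → L → L) : Submodule F L :=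
  sInf {I : Submodule F L | (∀ x : L, mul x x ∈ I) ∧ IsIdeal mul I}

/-- The two-sided ideal of `L` generated by a subspace `S`. -/
def idealClosure (F : Type*) [Field F] {L : Type*} [AddCommGroup L] [Module F L]
    (mul : L → L → L) (S : Submodule F L) : Submodule F L :=
  sInf {I : Submodule F L | S ≤ I ∧ IsIdeal mul I}

/-- Right powers: `B^0 = L` (convention), `B^1 = B`,
`B^{n+1} = span {bc : b ∈ B^n, c ∈ B}`. -/
def rpow (F : Type*) [Field F] {L : Type*} [AddCommGroup L] [Module F L]
    (mul : L → L → L) (B : Submodule F L) : ℕ → Submodule F L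
  | 0 => ⊤
  | 1 => B
  | n + 2 => Submodule.span F
      {x : L | ∃ b ∈ rpow F mul B (n + 1), ∃ c ∈ B, x = mul b c}

/-- Left powers: `^0B = L` (convention), `^1B = B`,
`^{n+1}B = span {bc : b ∈ B, c ∈ ^nB}`. -/
def lpow (F : Type*) [Field F] {L : Type*} [AddCommGroup L] [Module F L]
    (mul : L → L → L) (B : Submodule F L) : ℕ → Submodule F L
  | 0 => ⊤
  | 1 => B
  | n + 2 => Submodule.span F
      {x : L | ∃ b ∈ B, ∃ c ∈ lpow F mul B (n + 1), x = mul b c}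

/-- The right-normed product `rightProd mul a [b₁, …, bₖ] = ((…(a b₁)…) bₖ)`,
with all parentheses associated to the left. -/
def rightProd {L : Type*} (mul : L → L → L) : L → List L → L
  | a, [] => a
  | a, b :: l => rightProd mul (mul a b) l

/-- `D_{(L,k)}`: the span of all right-normed products `d a_k ⋯ a_1`
with `d ∈ D` and `a_i ∈ L`. -/
def rightMulSpan (F : Type*) [Field F] {L : Type*} [AddCommGroup L] [Module F L]
    (mul : L → L → L) (D : Submodule F L) (k : ℕ) : Submodule F L :=
  Submodule.span F
    {x : L | ∃ d ∈ D, ∃ l : List L, l.length = k ∧ x = rightProd mul d l}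

/-- A formal nonassociative product (a word of elements of `L` parenthesized
in an arbitrary way). -/
inductive PTree (L : Type*) where
  | leaf : L → PTree L
  | node : PTree L → PTree L → PTree L

/-- Evaluation of a parenthesized product in `L`. -/
def PTree.eval {L : Type*} (mul : L → L → L) : PTree L → L
  | .leaf a => a
  | .node s t => mul (PTree.eval mul s) (PTree.eval mul t)

/-- The list of factors of a parenthesized product, in order. -/
def PTree.leaves {L : Type*} : PTree L → List L
  | .leaf a => [a]
  | .node s t => s.leaves ++ t.leaves

/-- The length (number of factors) of a parenthesized product. -/
def PTree.length {L : Type*} (t : PTree L) : ℕ := t.leaves.length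

/-- The weight of a parenthesized product with respect to `B`:
the number of its factors lying in `B`. -/
noncomputable def PTree.weight {F : Type*} [Field F] {L : Type*} [AddCommGroup L]
    [Module F L] (B : Submodule F L) (t : PTree L) : ℕ :=
  t.leaves.countP (fun y => decide (y ∈ B))

/-- `B^{⟨n⟩}`: the span of all products of elements of `L` of weight at least `n`
with respect to `B`. -/
noncomputable def weightSpan (F : Type*) [Field F] {L : Type*} [AddCommGroup L]
    [Module F L] (mul : L → L → L) (B : Submodule F L) (n : ℕ) : Submodule F L :=
  Submodule.span F
    {x : L | ∃ t : PTree L, n ≤ PTree.weight B t ∧ x = PTree.eval mul t}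

/-- `B^{{n}}`: the span of all length-`n` products all of whose factors lie in `B`. -/
def lengthSpanIn (F : Type*) [Field F] {L : Type*} [AddCommGroup L] [Module F L]
    (mul : L → L → L) (B : Submodule F L) (n : ℕ) : Submodule F L :=
  Submodule.span F
    {x : L | ∃ t : PTree L, PTree.length t = n ∧ (∀ a ∈ PTree.leaves t, a ∈ B) ∧
      x = PTree.eval mul t}

theorem aux_right {F : Type*} [Field F] {L : Type*} [AddCommGroup L] [Module F L]
    {mul : L → L → L} (hbil : IsBilin F mul) (hleib : IsRightLeibniz mul)
    {B : Submodule F L} (hB : IsIdeal mul B) :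
    ∀ (m : ℕ) (a x : L), a ∈ rpow F mul B m → mul a x ∈ rpow F mul B m
  | 0, _, _, _ => by simp [rpow]
  | 1, a, x, h => (hB x a h).2
  | m + 2, a, x, h => by
    obtain ⟨h1, h2, h3, h4⟩ := hbil
    have z : mul 0 x = 0 := by simpa using h3 0 0 x
    rw [rpow] at h
    induction h using Submodule.span_induction with
    | mem y hy =>
      obtain ⟨b, hb, c, hc, rfl⟩ := hy
      have e : mul (mul b c) x = mul b (mul c x) + mul (mul b x) c := by
        rw [hleib b c x]; abel
      rw [e, rpow]
      exact Submodule.add_mem _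
        (Submodule.subset_span ⟨b, hb, _, (hB x c hc).2, rfl⟩)
        (Submodule.subset_span
          ⟨_, aux_right ⟨h1, h2, h3, h4⟩ hleib hB (m + 1) b x hb, c, hc, rfl⟩)
    | zero => rw [z]; exact Submodule.zero_mem _
    | add u v _ _ hu hv => rw [h1]; exact Submodule.add_mem _ hu hv
    | smul r u _ hu => rw [h3]; exact Submodule.smul_mem _ r hu

theorem aux_one {F : Type*} [Field F] {L : Type*} [AddCommGroup L] [Module F L]
    {mul : L → L → L} {B : Submodule F L} (hB : IsIdeal mul B) :
    ∀ (m : ℕ) (a b : L), a ∈ rpow F mul B m → b ∈ B → mul a b ∈ rpow F mul B (m + 1)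
  | 0, a, b, _, hb => (hB a b hb).1
  | m + 1, a, b, ha, hb => by
    rw [rpow]
    exact Submodule.subset_span ⟨a, ha, b, hb, rfl⟩

theorem aux_mul {F : Type*} [Field F] {L : Type*} [AddCommGroup L] [Module F L]
    {mul : L → L → L} (hbil : IsBilin F mul) (hleib : IsRightLeibniz mul)
    {B : Submodule F L} (hB : IsIdeal mul B) :
    ∀ (n m : ℕ) (a b : L), a ∈ rpow F mul B m → b ∈ rpow F mul B n →
      mul a b ∈ rpow F mul B (m + n)
  | 0, m, a, b, ha, _ => aux_right hbil hleib hB m a b ha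
  | 1, m, a, b, ha, hb => aux_one hB m a b ha hb
  | n + 2, m, a, b, ha, hb => by
    obtain ⟨h1, h2, h3, h4⟩ := hbil
    have z : mul a 0 = 0 := by simpa using h4 0 a 0
    rw [rpow] at hb
    induction hb using Submodule.span_induction with
    | mem y hy =>
      obtain ⟨b, hb, c, hc, rfl⟩ := hy
      rw [hleib]
      refine Submodule.sub_mem _ ?_ ?_
      · exact aux_one hB (m + (n + 1)) _ c
          (aux_mul ⟨h1, h2, h3, h4⟩ hleib hB (n + 1) m a b ha hb) hc
      · have := aux_mul ⟨h1, h2, h3, h4⟩ hleib hB (n + 1) (m + 1) _ b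
          (aux_one hB m a c ha hc) hb
        rwa [show m + 1 + (n + 1) = m + (n + 2) by omega] at this
    | zero => rw [z]; exact Submodule.zero_mem _
    | add u v _ _ hu hv => rw [h2]; exact Submodule.add_mem _ hu hv
    | smul r u _ hu => rw [h4]; exact Submodule.smul_mem _ r hu

theorem aux_anti {F : Type*} [Field F] {L : Type*} [AddCommGroup L] [Module F L]
    {mul : L → L → L} (hbil : IsBilin F mul) (hleib : IsRightLeibniz mul)
    {B : Submodule F L} (hB : IsIdeal mul B) : Antitone (rpow F mul B) := by
  refine antitone_nat_of_succ_le fun n => ?_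
  cases n with
  | zero => simp [rpow]
  | succ n =>
    rw [rpow, Submodule.span_le]
    rintro x ⟨b, hb, c, _, rfl⟩
    exact aux_right hbil hleib hB (n + 1) b c hb

theorem aux_tree {F : Type*} [Field F] {L : Type*} [AddCommGroup L] [Module F L]
    {mul : L → L → L} (hbil : IsBilin F mul) (hleib : IsRightLeibniz mul)
    {B : Submodule F L} (hB : IsIdeal mul B) (t : PTree L) :
    PTree.eval mul t ∈ rpow F mul B (PTree.weight B t) := by
  induction t with
  | leaf a =>
    by_cases h : a ∈ B
    · simpa [PTree.weight, PTree.leaves, PTree.eval, h, rpow] using h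
    · simp [PTree.weight, PTree.leaves, PTree.eval, h, rpow]
  | node s t hs ht =>
    have e : PTree.weight B (.node s t) = PTree.weight B s + PTree.weight B t := by
      simp [PTree.weight, PTree.leaves]
    rw [e]
    exact aux_mul hbil hleib hB _ _ _ _ hs ht

theorem aux_len {F : Type*} [Field F] {L : Type*} [AddCommGroup L] [Module F L]
    {mul : L → L → L} (hbil : IsBilin F mul) {B : Submodule F L} :
    ∀ n : ℕ, rpow F mul B (n + 1) ≤ lengthSpanIn F mul B (n + 1)
  | 0 => fun b hb => Submodule.subset_span
      ⟨.leaf b, by simp [PTree.length, PTree.leaves],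
        by simpa [PTree.leaves] using (show b ∈ B from hb), rfl⟩
  | n + 1 => by
    obtain ⟨h1, h2, h3, h4⟩ := hbil
    rw [rpow, Submodule.span_le]
    rintro x ⟨b, hb, c, hc, rfl⟩
    have z : mul 0 c = 0 := by simpa using h3 0 0 c
    have hb' := aux_len ⟨h1, h2, h3, h4⟩ n hb
    clear hb
    rw [lengthSpanIn] at hb'
    change mul b c ∈ lengthSpanIn F mul B (n + 1 + 1)
    induction hb' using Submodule.span_induction with
    | mem y hy =>
      obtain ⟨t, ht, hl, rfl⟩ := hy
      refine Submodule.subset_span ⟨.node t (.leaf c), ?_, ?_, rfl⟩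
      · simpa [PTree.length, PTree.leaves] using ht
      · intro a ha
        simp only [PTree.leaves, List.mem_append, List.mem_singleton] at ha
        rcases ha with ha | rfl
        · exact hl a ha
        · exact hc
    | zero => rw [z]; exact Submodule.zero_mem _
    | add u v _ _ hu hv => rw [h1]; exact Submodule.add_mem _ hu hv
    | smul r u _ hu => rw [h3]; exact Submodule.smul_mem _ r hu

/-- For an `Es_{k'}`-right nil ideal `B`, right nilpotency,
nilpotency and strong nilpotency are equivalent. -/
theorem nilpotency_equivalences_ideal
    {F : Type*} [Field F] {L : Type*} [AddCommGroup L] [Module F L]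
    (h2 : (2 : F) ≠ 0) (mul : L → L → L)
    (hbil : IsBilin F mul) (hleib : IsRightLeibniz mul)
    (B : Submodule F L) (hB : IsIdeal mul B)
    (k' : ℕ) (hk' : 1 ≤ k')
    (hnil : rightMulSpan F mul (B ⊓ Ess F mul) k' = ⊥) :
    ((∃ n, 1 ≤ n ∧ rpow F mul B n = ⊥) ↔
        (∃ n, 1 ≤ n ∧ lengthSpanIn F mul B n = ⊥)) ∧
    ((∃ n, 1 ≤ n ∧ lengthSpanIn F mul B n = ⊥) ↔
        (∃ n, 1 ≤ n ∧ weightSpan F mul B n = ⊥)) := by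
  have hA : (∃ n, 1 ≤ n ∧ rpow F mul B n = ⊥) → ∃ n, 1 ≤ n ∧ weightSpan F mul B n = ⊥ := by
    rintro ⟨n, hn, h⟩
    refine ⟨n, hn, ?_⟩
    rw [eq_bot_iff, ← h, weightSpan, Submodule.span_le]
    rintro x ⟨t, ht, rfl⟩
    exact aux_anti hbil hleib hB ht (aux_tree hbil hleib hB t)
  have hW : (∃ n, 1 ≤ n ∧ weightSpan F mul B n = ⊥) →
      ∃ n, 1 ≤ n ∧ lengthSpanIn F mul B n = ⊥ := by
    rintro ⟨n, hn, h⟩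
    refine ⟨n, hn, ?_⟩
    rw [eq_bot_iff, ← h, lengthSpanIn, Submodule.span_le]
    rintro x ⟨t, ht, hl, rfl⟩
    refine Submodule.subset_span ⟨t, ?_, rfl⟩
    rw [PTree.weight, List.countP_eq_length.2 (by simpa using hl)]
    exact ht.ge
  have hN : (∃ n, 1 ≤ n ∧ lengthSpanIn F mul B n = ⊥) →
      ∃ n, 1 ≤ n ∧ rpow F mul B n = ⊥ := by
    rintro ⟨n, hn, h⟩
    obtain ⟨k, rfl⟩ : ∃ k, n = k + 1 := ⟨n - 1, by omega⟩
    exact ⟨k + 1, hn, by rw [eq_bot_iff, ← h]; exact aux_len hbil k⟩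
  exact ⟨⟨fun h => hW (hA h), hN⟩, ⟨fun h => hA (hN h), hW⟩⟩
end

section
/- Let L be a right Leibniz algebra over a field of characteristic ≠ 2. Then the following are equivalent: (i) L is right nilpotent (L^n = 0 for some n, where L^1 = L and L^{k+1} = span{bc : b ∈ L^k, c ∈ L}); (ii) L is nilpotent (every product of some fixed length n of elements of L, arbitrarily parenthesized, vanishes); (iii) L is strongly nilpotent (every product of at least some fixed number n of elements of L, arbitrarily parenthesized, vanishes). -/
open Classical

theorem rpow_mul_mem {F : Type*} [Field F] {L : Type*} [AddCommGroup L] [Module F L]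
    (mul : L → L → L) (hbil : IsBilin F mul) (hleib : IsRightLeibniz mul) (n : ℕ) :
    ∀ (m : ℕ) (a b : L), a ∈ rpow F mul (⊤ : Submodule F L) (m + 1) →
      b ∈ rpow F mul (⊤ : Submodule F L) (n + 1) →
      mul a b ∈ rpow F mul (⊤ : Submodule F L) (m + n + 2) := by
  obtain ⟨-, hadd, -, hsm⟩ := hbil
  induction n with
  | zero =>
    intro m a b ha _
    exact Submodule.subset_span ⟨a, ha, b, trivial, rfl⟩
  | succ n ih =>
    intro m a b ha hb
    have hb' : b ∈ Submodule.span F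
      {x : L | ∃ b ∈ rpow F mul (⊤ : Submodule F L) (n + 1), ∃ c ∈ (⊤ : Submodule F L),
        x = mul b c} := hb
    clear hb
    induction hb' using Submodule.span_induction with
    | mem x hx =>
      obtain ⟨b, hb, c, -, rfl⟩ := hx
      rw [hleib]
      refine Submodule.sub_mem _ ?_ ?_
      · exact Submodule.subset_span ⟨mul a b, ih m a b ha hb, c, trivial, rfl⟩
      · have h1 : mul a c ∈ rpow F mul (⊤ : Submodule F L) (m + 1 + 1) :=
          Submodule.subset_span ⟨a, ha, c, trivial, rfl⟩
        have h3 := ih (m + 1) _ b h1 hb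
        rwa [show m + 1 + n + 2 = m + (n + 1) + 2 by omega] at h3
    | zero =>
      have h0 : mul a 0 = 0 := by simpa using hsm 0 a 0
      rw [h0]; exact Submodule.zero_mem _
    | add x y hx hy h1 h2 =>
      rw [hadd]; exact Submodule.add_mem _ h1 h2
    | smul r x hx h1 =>
      rw [hsm]; exact Submodule.smul_mem _ _ h1

theorem ptree_length_pos {L : Type*} (t : PTree L) : 1 ≤ t.length := by
  induction t with
  | leaf a => simp [PTree.length, PTree.leaves]
  | node s t h1 h2 =>
    simp only [PTree.length, PTree.leaves, List.length_append] at *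
    omega

theorem ptree_eval_mem {F : Type*} [Field F] {L : Type*} [AddCommGroup L] [Module F L]
    (mul : L → L → L) (hbil : IsBilin F mul) (hleib : IsRightLeibniz mul) (t : PTree L) :
    t.eval mul ∈ rpow F mul (⊤ : Submodule F L) t.length := by
  induction t with
  | leaf a => exact (trivial : a ∈ (⊤ : Submodule F L))
  | node s t h1 h2 =>
    have e : (PTree.node s t).length = s.length + t.length := by
      simp [PTree.length, PTree.leaves]
    rw [e]
    obtain ⟨p, hp⟩ := Nat.exists_eq_add_of_le' (ptree_length_pos s)
    obtain ⟨q, hq⟩ := Nat.exists_eq_add_of_le' (ptree_length_pos t)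
    rw [hp] at h1 ⊢
    rw [hq] at h2 ⊢
    have h3 := rpow_mul_mem mul hbil hleib q p _ _ h1 h2
    rwa [show p + q + 2 = p + 1 + (q + 1) by omega] at h3

theorem rpow_bot_of_le {F : Type*} [Field F] {L : Type*} [AddCommGroup L] [Module F L]
    (mul : L → L → L) (hbil : IsBilin F mul) (n : ℕ)
    (h : rpow F mul (⊤ : Submodule F L) (n + 1) = ⊥) (k : ℕ) :
    rpow F mul (⊤ : Submodule F L) (n + k + 1) = ⊥ := by
  induction k with
  | zero => exact h
  | succ k ih =>
    refine (Submodule.span_eq_bot).2 ?_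
    rintro x ⟨b, hb, c, -, rfl⟩
    have hb2 : b = 0 := by
      have : b ∈ rpow F mul (⊤ : Submodule F L) (n + k + 1) := hb
      rwa [ih, Submodule.mem_bot] at this
    rw [hb2]
    simpa using hbil.2.2.1 0 0 c

theorem rpow_le_trees {F : Type*} [Field F] {L : Type*} [AddCommGroup L] [Module F L]
    (mul : L → L → L) (hbil : IsBilin F mul) (n : ℕ) :
    rpow F mul (⊤ : Submodule F L) (n + 1) ≤
      Submodule.span F {x : L | ∃ t : PTree L, t.length = n + 1 ∧ x = t.eval mul} := by
  induction n with
  | zero =>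
    intro x _
    exact Submodule.subset_span ⟨.leaf x, rfl, rfl⟩
  | succ n ih =>
    refine Submodule.span_le.2 ?_
    rintro x ⟨b, hb, c, -, rfl⟩
    have hb' := ih hb
    clear hb
    induction hb' using Submodule.span_induction with
    | mem x hx =>
      obtain ⟨t, ht, rfl⟩ := hx
      refine Submodule.subset_span ⟨.node t (.leaf c), ?_, rfl⟩
      simp only [PTree.length, PTree.leaves, List.length_append, List.length_singleton] at *
      omega
    | zero =>
      have h0 : mul 0 c = 0 := by simpa using hbil.2.2.1 0 0 c
      rw [h0]; exact Submodule.zero_mem _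
    | add x y hx hy h1 h2 =>
      rw [hbil.1]; exact Submodule.add_mem _ h1 h2
    | smul r x hx h1 =>
      rw [hbil.2.2.1]; exact Submodule.smul_mem _ _ h1

/-- For a right Leibniz algebra `L`, right nilpotency,
nilpotency and strong nilpotency are equivalent. -/
theorem nilpotency_equivalences_algebra
    {F : Type*} [Field F] {L : Type*} [AddCommGroup L] [Module F L]
    (h2 : (2 : F) ≠ 0) (mul : L → L → L)
    (hbil : IsBilin F mul) (hleib : IsRightLeibniz mul) :
    ((∃ n, 1 ≤ n ∧ rpow F mul (⊤ : Submodule F L) n = ⊥) ↔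
        (∃ n, 1 ≤ n ∧ ∀ t : PTree L, PTree.length t = n → PTree.eval mul t = 0)) ∧
    ((∃ n, 1 ≤ n ∧ ∀ t : PTree L, PTree.length t = n → PTree.eval mul t = 0) ↔
        (∃ n, 1 ≤ n ∧ ∀ t : PTree L, n ≤ PTree.length t → PTree.eval mul t = 0)) := by
  have h13 : (∃ n, 1 ≤ n ∧ rpow F mul (⊤ : Submodule F L) n = ⊥) →
      (∃ n, 1 ≤ n ∧ ∀ t : PTree L, n ≤ PTree.length t → PTree.eval mul t = 0) := by
    rintro ⟨n, hn, h⟩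
    refine ⟨n, hn, fun t ht => ?_⟩
    obtain ⟨m, rfl⟩ := Nat.exists_eq_add_of_le' hn
    obtain ⟨k, hk⟩ := Nat.exists_eq_add_of_le ht
    have h3 := ptree_eval_mem (F := F) mul hbil hleib t
    rw [hk, show m + 1 + k = m + k + 1 by omega, rpow_bot_of_le mul hbil m h k] at h3
    simpa using h3
  have h32 : (∃ n, 1 ≤ n ∧ ∀ t : PTree L, n ≤ PTree.length t → PTree.eval mul t = 0) →
      (∃ n, 1 ≤ n ∧ ∀ t : PTree L, PTree.length t = n → PTree.eval mul t = 0) := by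
    rintro ⟨n, hn, h⟩
    exact ⟨n, hn, fun t ht => h t ht.ge⟩
  have h21 : (∃ n, 1 ≤ n ∧ ∀ t : PTree L, PTree.length t = n → PTree.eval mul t = 0) →
      (∃ n, 1 ≤ n ∧ rpow F mul (⊤ : Submodule F L) n = ⊥) := by
    rintro ⟨n, hn, h⟩
    refine ⟨n, hn, ?_⟩
    obtain ⟨m, rfl⟩ := Nat.exists_eq_add_of_le' hn
    refine eq_bot_iff.2 ((rpow_le_trees mul hbil m).trans (Submodule.span_le.2 ?_))
    rintro x ⟨t, ht, rfl⟩
    simpa using h t ht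
  exact ⟨⟨fun h => h32 (h13 h), h21⟩, ⟨fun h => h13 (h21 h), h32⟩⟩
end
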